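/- Let Φ be a Young function such that Φ and its conjugate Φ̃ are of class Δ₂, let {T(x)}_{x∈ℝ^N} be an N-dimensional dynamical system on Ω, assume ℳ is countably generated modulo μ-null sets, let (ε_k) ⊆ (0,1] with ε_k → 0, and let (u_k) be a sequence of measurable real functions on Q×Ω with sup_k ‖u_k‖_{Φ,Q×Ω} < ∞. Then there exist a subsequence (u_{k_j}) and a measurable function u₀ : Q×Ω×ℝ^N → ℝ, ℤ^N-periodic in its last variable with ‖u₀‖_{Φ,Q×Ω×Y} < ∞, such that (u_{k_j}) weakly stochastically 2-scale converges to u₀ along (ε_{k_j}). -/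

import Mathlib

open MeasureTheory Filter Topology ENNReal

noncomputable section

/-- Euclidean norm on `Fin N → ℝ`. -/
def enorm2 {N : ℕ} (v : Fin N → ℝ) : ℝ := Real.sqrt (∑ i, v i ^ 2)

/-- `Φ : [0,∞) → [0,∞)` is a Young function: continuous, convex, positive on `(0,∞)`,
with `Φ(t)/t → 0` as `t → 0⁺` and `Φ(t)/t → ∞` as `t → ∞` (so `Φ(0) = 0`). -/
def IsYoung (Φ : ℝ → ℝ) : Prop :=
  ContinuousOn Φ (Set.Ici 0) ∧ ConvexOn ℝ (Set.Ici 0) Φ ∧ Φ 0 = 0 ∧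
    (∀ t : ℝ, 0 < t → 0 < Φ t) ∧ (∀ t : ℝ, 0 ≤ t → 0 ≤ Φ t) ∧
    Tendsto (fun t => Φ t / t) (nhdsWithin 0 (Set.Ioi 0)) (nhds 0) ∧
    Tendsto (fun t => Φ t / t) atTop atTop

/-- The `Δ₂`-condition (at infinity). -/
def Delta2 (Φ : ℝ → ℝ) : Prop :=
  ∃ α : ℝ, 0 < α ∧ ∃ t₀ : ℝ, 0 ≤ t₀ ∧ ∀ t : ℝ, t₀ ≤ t → Φ (2 * t) ≤ α * Φ t

/-- The `Δ'`-condition (at infinity). -/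
def DeltaPrime (Φ : ℝ → ℝ) : Prop :=
  ∃ k : ℝ, 0 < k ∧ ∃ t₀ s₀ : ℝ, 0 ≤ t₀ ∧ 0 ≤ s₀ ∧
    ∀ t s : ℝ, t₀ ≤ t → s₀ ≤ s → Φ (t * s) ≤ k * Φ t * Φ s

/-- The conjugate Young function `Φ̃(t) = sup_{s ≥ 0} (st − Φ(s))`. -/
def conjY (Φ : ℝ → ℝ) (t : ℝ) : ℝ := sSup ((fun s => s * t - Φ s) '' Set.Ici 0)

/-- The Luxemburg norm `‖u‖_{Φ,X} = inf {δ > 0 : ∫_X Φ(|u|/δ) dν ≤ 1}` (`+∞` if no such `δ`). -/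
def luxNorm {X : Type*} [MeasurableSpace X] (Φ : ℝ → ℝ) (ν : Measure X) (u : X → ℝ) : ℝ≥0∞ :=
  sInf {d : ℝ≥0∞ | ∃ δ : ℝ, 0 < δ ∧ d = ENNReal.ofReal δ ∧
    (∫⁻ x, ENNReal.ofReal (Φ (|u x| / δ)) ∂ν) ≤ 1}

/-- An `N`-dimensional dynamical system on `Ω` preserving `μ`. -/
def IsDynSys {N : ℕ} {Ω : Type*} [MeasurableSpace Ω] (μ : Measure Ω)
    (T : (Fin N → ℝ) → Ω → Ω) : Prop :=
  T 0 = id ∧ (∀ x y : Fin N → ℝ, T (x + y) = T x ∘ T y) ∧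
    (∀ x : Fin N → ℝ, MeasurePreserving (T x) μ μ) ∧
    Measurable fun p : (Fin N → ℝ) × Ω => T p.1 p.2

/-- `ℤ^N`-periodicity. -/
def ZPeriodic {N : ℕ} (g : (Fin N → ℝ) → ℝ) : Prop :=
  ∀ (y : Fin N → ℝ) (k : Fin N → ℤ), g (y + fun i => (k i : ℝ)) = g y

/-- The unit cube `Y = [0,1]^N`. -/
def Ycube (N : ℕ) : Set (Fin N → ℝ) := Set.Icc 0 1

/-- `ℳ` is countably generated modulo `μ`-null sets. -/
def CountGenModNull {Ω : Type*} [MeasurableSpace Ω] (μ : Measure Ω) : Prop :=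
  ∃ S : ℕ → Set Ω, (∀ n, MeasurableSet (S n)) ∧
    ∀ A : Set Ω, MeasurableSet A →
      ∃ B : Set Ω, MeasurableSet[MeasurableSpace.generateFrom (Set.range S)] B ∧
        μ (symmDiff A B) = 0

/-- Weak stochastic two-scale convergence of `(u k)` to `u₀` along the sequence `(ε k)`. -/
def WeakStoch2Scale {N : ℕ} {Ω : Type*} [MeasurableSpace Ω] (μ : Measure Ω)
    (T : (Fin N → ℝ) → Ω → Ω) (Q : Set (Fin N → ℝ)) (ε : ℕ → ℝ)
    (u : ℕ → (Fin N → ℝ) → Ω → ℝ) (u₀ : (Fin N → ℝ) → Ω → (Fin N → ℝ) → ℝ) : Prop :=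
  ∀ φ : (Fin N → ℝ) → ℝ, ContDiff ℝ (⊤ : ℕ∞) φ → HasCompactSupport φ → tsupport φ ⊆ Q →
    ∀ ψ : Ω → ℝ, Measurable ψ → (∃ C : ℝ, ∀ ω, |ψ ω| ≤ C) →
      ∀ g : (Fin N → ℝ) → ℝ, Continuous g → ZPeriodic g →
        Tendsto
          (fun k => ∫ x in Q, (∫ ω, u k x ω * φ x * ψ (T ((ε k)⁻¹ • x) ω) *
              g (((ε k) ^ 2)⁻¹ • x) ∂μ))
          atTop
          (nhds (∫ x in Q, (∫ ω, (∫ y in Ycube N, u₀ x ω y * φ x * ψ ω * g y) ∂μ)))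


lemma hilbert_weak {H : Type*} [NormedAddCommGroup H] [InnerProductSpace ℝ H] [CompleteSpace H]
    (x : ℕ → H) (C : ℝ) (hx : ∀ n, ‖x n‖ ≤ C) :
    ∃ σ : ℕ → ℕ, StrictMono σ ∧ ∃ x₀ : H, ∀ h : H,
      Tendsto (fun n => inner ℝ (x (σ n)) h) atTop (𝓝 (inner ℝ x₀ h)) := by
  set K : Submodule ℝ H := (Submodule.span ℝ (Set.range x)).topologicalClosure with hK
  have hxK : ∀ n, x n ∈ K := fun n =>
    Submodule.le_topologicalClosure _ (Submodule.subset_span ⟨n, rfl⟩)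
  have : CompleteSpace K := (Submodule.isClosed_topologicalClosure _).completeSpace_coe
  have hsep : TopologicalSpace.IsSeparable (K : Set H) := by
    rw [hK, Submodule.topologicalClosure_coe]
    exact ((Set.countable_range x).isSeparable.span (R := ℝ)).closure
  have : TopologicalSpace.SeparableSpace K := hsep.separableSpace
  let y : ℕ → K := fun n => ⟨x n, hxK n⟩
  let f : ℕ → WeakDual ℝ K := fun n => StrongDual.toWeakDual (InnerProductSpace.toDual ℝ K (y n))
  have hf : ∀ n, f n ∈ WeakDual.toStrongDual ⁻¹' Metric.closedBall (0 : StrongDual ℝ K) C := by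
    intro n
    rw [Set.mem_preimage]
    have : ‖InnerProductSpace.toDual ℝ K (y n)‖ ≤ C := by
      rw [LinearIsometryEquiv.norm_map]; exact hx n
    exact mem_closedBall_zero_iff.2 this
  obtain ⟨a, -, σ, hσ, hlim⟩ := WeakDual.isSeqCompact_closedBall ℝ K 0 C hf
  refine ⟨σ, hσ, ((InnerProductSpace.toDual ℝ K).symm (WeakDual.toStrongDual a) : K), fun h => ?_⟩
  have key := ((WeakDual.eval_continuous (K.orthogonalProjectionOnto h)).tendsto a).comp hlim
  have e : ∀ z : K, inner ℝ (z : H) h = inner ℝ z (K.orthogonalProjectionOnto h) := by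
    intro z
    exact (Submodule.inner_orthogonalProjectionOnto_eq_of_mem_left z h).symm
  rw [e, InnerProductSpace.toDual_symm_apply]
  refine key.congr fun n => ?_
  change (InnerProductSpace.toDual ℝ K (y (σ n))) _ = _
  rw [InnerProductSpace.toDual_apply_apply, ← e]

lemma l2_weak_family {X : Type*} [MeasurableSpace X] (lam : Measure X) [IsFiniteMeasure lam]
    (f : ℕ → ℕ → X → ℝ) (hf : ∀ k M, Measurable (f k M)) (B : ℕ → ℝ)
    (hB : ∀ M, 0 ≤ B M) (hfB : ∀ k M p, |f k M p| ≤ B M) :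
    ∃ σ : ℕ → ℕ, StrictMono σ ∧ ∃ v : ℕ → X → ℝ, (∀ M, MemLp (v M) 2 lam) ∧
      ∀ M, ∀ h : X → ℝ, MemLp h 2 lam →
        Tendsto (fun j => ∫ p, f (σ j) M p * h p ∂lam) atTop (𝓝 (∫ p, v M p * h p ∂lam)) := by
  have hm : ∀ k M, MemLp (f k M) 2 lam := fun k M =>
    MemLp.of_bound (hf k M).aestronglyMeasurable (B M) (Eventually.of_forall (hfB k M))
  obtain ⟨A, hA0, hA⟩ : ∃ A : ℝ, 0 ≤ A ∧ ∀ k M, ‖(hm k M).toLp‖ ≤ A * B M := by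
    refine ⟨_, ?_, fun k M => Lp.norm_le_of_ae_bound (hB M) ?_⟩
    · positivity
    · filter_upwards [(hm k M).coeFn_toLp] with p hp
      rw [hp]; exact hfB k M p
  let c : ℕ → ℝ := fun M => (1/2)^M / (1 + A * B M)
  have hD : ∀ M, 0 < 1 + A * B M := fun M => by have := mul_nonneg hA0 (hB M); linarith
  have hc : ∀ M, 0 < c M := fun M => by have := hD M; positivity
  let y : ℕ → ℕ → Lp ℝ 2 lam := fun k M => c M • (hm k M).toLp
  have hy : ∀ k M, ‖y k M‖ ≤ (1/2)^M := by
    intro k M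
    rw [norm_smul, Real.norm_of_nonneg (hc M).le]
    simp only [c]
    rw [div_mul_eq_mul_div, div_le_iff₀ (hD M)]
    have := hA k M
    gcongr; linarith
  have hy2 : ∀ k M, ‖y k M‖ ^ ((2:ℝ≥0∞).toReal) ≤ (1/4)^M := by
    intro k M
    simp only [ENNReal.toReal_ofNat, Real.rpow_ofNat]
    calc ‖y k M‖^2 ≤ ((1/2)^M)^2 := by gcongr; exact hy k M
      _ = (1/4)^M := by rw [← pow_mul, mul_comm, pow_mul]; norm_num
  have hs : Summable (fun M : ℕ => (1/4:ℝ)^M) := summable_geometric_of_lt_one (by norm_num) (by norm_num)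
  have hys : ∀ k, Summable (fun M => ‖y k M‖ ^ ((2:ℝ≥0∞).toReal)) := fun k =>
    Summable.of_nonneg_of_le (fun M => by positivity) (hy2 k) hs
  let x : ℕ → lp (fun _ : ℕ => Lp ℝ 2 lam) 2 := fun k => ⟨y k, memℓp_gen (hys k)⟩
  have hx : ∀ k, ‖x k‖ ≤ 2 := by
    intro k
    refine lp.norm_le_of_tsum_le (by norm_num) (by norm_num) ?_
    calc _ ≤ ∑' M : ℕ, (1/4:ℝ)^M := (hys k).tsum_le_tsum (hy2 k) hs
      _ ≤ _ := by rw [tsum_geometric_of_lt_one (by norm_num) (by norm_num)]; norm_num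
  obtain ⟨σ, hσ, x₀, hlim⟩ := hilbert_weak x 2 hx
  refine ⟨σ, hσ, fun M => (((c M)⁻¹ • x₀ M : Lp ℝ 2 lam) : X → ℝ), fun M => Lp.memLp _, ?_⟩
  intro M h hh
  have key := (hlim (lp.single 2 M hh.toLp)).const_mul (c M)⁻¹
  simp only [lp.inner_single_right] at key
  have e : ∀ a b : Lp ℝ 2 lam, inner ℝ a b = ∫ p, a p * b p ∂lam := by
    intro a b
    rw [L2.inner_def]
    refine integral_congr_ae (Eventually.of_forall fun p => ?_)
    simp [mul_comm]
  have key2 : Tendsto (fun j => inner ℝ ((hm (σ j) M).toLp) hh.toLp) atTop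
      (𝓝 (inner ℝ ((c M)⁻¹ • x₀ M) hh.toLp)) := by
    rw [real_inner_smul_left]
    refine key.congr fun j => ?_
    change (c M)⁻¹ * inner ℝ (c M • (hm (σ j) M).toLp) hh.toLp = _
    rw [real_inner_smul_left, ← mul_assoc, inv_mul_cancel₀ (hc M).ne', one_mul]
  simp only [e] at key2
  have e2 : ∫ p, ((c M)⁻¹ • x₀ M : Lp ℝ 2 lam) p * (hh.toLp : Lp ℝ 2 lam) p ∂lam =
      ∫ p, ((c M)⁻¹ • x₀ M : Lp ℝ 2 lam) p * h p ∂lam :=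
    integral_congr_ae (by filter_upwards [hh.coeFn_toLp] with p hp; rw [hp])
  rw [e2] at key2
  refine key2.congr fun j => integral_congr_ae ?_
  filter_upwards [hh.coeFn_toLp, (hm (σ j) M).coeFn_toLp] with p hp hp'
  rw [hp, hp']

/-- truncation at level `M` -/
def clampR (M : ℝ) (t : ℝ) : ℝ := max (-M) (min t M)

lemma clampR_abs_le {M t : ℝ} (hM : 0 ≤ M) : |clampR M t| ≤ M := by
  unfold clampR; rw [abs_le]; constructor
  · exact le_max_left _ _
  · exact max_le (by linarith) (min_le_right _ _)

lemma clampR_diff {M M' t : ℝ} (hM : 0 ≤ M) (h : M ≤ M') :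
    |t - clampR M' t| ≤ |t - clampR M t| := by
  unfold clampR
  rcases le_total t M with h1 | h1 <;> rcases le_total t M' with h2 | h2 <;>
  rcases le_total t (-M) with h3 | h3 <;> rcases le_total t (-M') with h4 | h4 <;>
  rcases le_total (-M) M with h5 | h5 <;> rcases le_total (-M') M' with h6 | h6 <;>
  simp only [min_eq_left, min_eq_right, max_eq_left, max_eq_right, h1, h2, h3, h4, h5, h6] <;>
  first
  | (rw [abs_le]; constructor <;> cases abs_cases (t - M) <;> cases abs_cases (t - -M) <;> cases abs_cases (t-t) <;> linarith)
  
lemma measurable_clampR (M : ℝ) : Measurable (clampR M) := by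
  unfold clampR; fun_prop

lemma weak_L1 {X : Type*} [MeasurableSpace X] (lam : Measure X) [IsFiniteMeasure lam]
    (W : ℕ → X → ℝ) (hW : ∀ k, Measurable (W k)) (hWi : ∀ k, Integrable (W k) lam)
    (htail : ∀ e : ℝ, 0 < e → ∃ M : ℕ, ∀ k, ∫ p, |W k p - clampR M (W k p)| ∂lam ≤ e) :
    ∃ σ : ℕ → ℕ, StrictMono σ ∧ ∃ w : X → ℝ, Measurable w ∧ Integrable w lam ∧
      ∀ h : X → ℝ, Measurable h → (∃ C, ∀ p, |h p| ≤ C) →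
        Tendsto (fun j => ∫ p, W (σ j) p * h p ∂lam) atTop (𝓝 (∫ p, w p * h p ∂lam)) := by
  let f : ℕ → ℕ → X → ℝ := fun k M p => clampR M (W k p)
  have hf : ∀ k M, Measurable (f k M) := fun k M => (measurable_clampR _).comp (hW k)
  have hfb : ∀ k (M : ℕ) p, |f k M p| ≤ (M : ℝ) := fun k M p => clampR_abs_le (Nat.cast_nonneg M)
  have hfi : ∀ k M, Integrable (f k M) lam := fun k M =>
    Integrable.of_bound (hf k M).aestronglyMeasurable (M:ℝ) (Eventually.of_forall (hfb k M))
  obtain ⟨σ, hσ, v, hv, hlim⟩ := l2_weak_family lam f hf (fun M => M) (fun M => Nat.cast_nonneg M) hfb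
  have hvi : ∀ M, Integrable (v M) lam := fun M => (hv M).integrable (by norm_num)
  have htail' : ∀ e : ℝ, 0 < e → ∃ M₀ : ℕ, ∀ M, M₀ ≤ M → ∀ k, ∫ p, |W k p - f k M p| ∂lam ≤ e := by
    intro e he
    obtain ⟨M₀, h⟩ := htail e he
    refine ⟨M₀, fun M hM k => le_trans ?_ (h k)⟩
    refine integral_mono ((hWi k).sub (hfi k M)).abs ((hWi k).sub (hfi k M₀)).abs fun p => ?_
    exact clampR_diff (Nat.cast_nonneg _) (by exact_mod_cast hM)
  -- generic bound
  have hmul : ∀ (F h : X → ℝ) (C : ℝ), Integrable F lam → AEStronglyMeasurable h lam → (∀ p, |h p| ≤ C) →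
      Integrable (fun p => F p * h p) lam ∧ |∫ p, F p * h p ∂lam| ≤ C * ∫ p, |F p| ∂lam := by
    intro F h C hF hh hC
    have h1 : Integrable (fun p => F p * h p) lam :=
      hF.mul_bdd hh (Eventually.of_forall hC)
    refine ⟨h1, ?_⟩
    calc |∫ p, F p * h p ∂lam| ≤ ∫ p, |F p * h p| ∂lam := abs_integral_le_integral_abs
      _ ≤ ∫ p, C * |F p| ∂lam := by
        refine integral_mono h1.abs (hF.abs.const_mul C) fun p => ?_
        simp only [abs_mul]
        rw [mul_comm]
        exact mul_le_mul_of_nonneg_right (hC p) (abs_nonneg _)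
      _ = _ := by rw [integral_const_mul]
  have hcau : ∀ e : ℝ, 0 < e → ∃ M₀ : ℕ, ∀ M, M₀ ≤ M → ∀ M', M₀ ≤ M' →
      ∫ p, |v M p - v M' p| ∂lam ≤ 2 * e := by
    intro e he
    obtain ⟨M₀, h⟩ := htail' e he
    refine ⟨M₀, fun M hM M' hM' => ?_⟩
    let s : X → ℝ := fun p => ((SignType.sign (v M p - v M' p) : SignType) : ℝ)
    have hs : AEStronglyMeasurable s lam := by
      have hmeas : Measurable (fun t : ℝ => ((SignType.sign t : SignType) : ℝ)) := by
        have : (fun t : ℝ => ((SignType.sign t : SignType) : ℝ)) = fun t => if 0 < t then 1 else if t < 0 then -1 else 0 := by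
          funext t; rw [sign_apply]; split_ifs <;> simp
        rw [this]
        exact Measurable.ite measurableSet_Ioi measurable_const
          (Measurable.ite measurableSet_Iio measurable_const measurable_const)
      exact (hmeas.comp_aemeasurable ((hvi M).sub (hvi M')).aemeasurable).aestronglyMeasurable
    have hs1 : ∀ p, |s p| ≤ 1 := by
      intro p; simp only [s]
      rcases lt_trichotomy (v M p - v M' p) 0 with h | h | h <;> simp [h]
    have hs2 : MemLp s 2 lam := MemLp.of_bound hs 1 (Eventually.of_forall hs1)
    have e1 := (hlim M s hs2).sub (hlim M' s hs2)
    have e2 : (∫ p, v M p * s p ∂lam) - ∫ p, v M' p * s p ∂lam = ∫ p, |v M p - v M' p| ∂lam := by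
      rw [← integral_sub (hmul _ _ 1 (hvi M) hs hs1).1 (hmul _ _ 1 (hvi M') hs hs1).1]
      refine integral_congr_ae (Eventually.of_forall fun p => ?_)
      simp only [s]; rw [← sub_mul, self_mul_sign]
    rw [e2] at e1
    refine le_of_tendsto e1 (Eventually.of_forall fun j => ?_)
    rw [← integral_sub (hmul _ _ 1 (hfi _ M) hs hs1).1 (hmul _ _ 1 (hfi _ M') hs hs1).1]
    simp_rw [← sub_mul]
    refine (le_abs_self _).trans ((hmul _ s 1 ((hfi _ M).sub (hfi _ M')) hs hs1).2.trans ?_)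
    rw [one_mul]
    calc _ ≤ ∫ p, (|W (σ j) p - f (σ j) M p| + |W (σ j) p - f (σ j) M' p|) ∂lam := by
          refine integral_mono ((hfi _ M).sub (hfi _ M')).abs (((hWi _).sub (hfi _ M)).abs.add ((hWi _).sub (hfi _ M')).abs) fun p => ?_
          have := abs_sub_le (f (σ j) M p) (W (σ j) p) (f (σ j) M' p)
          rw [abs_sub_comm (f (σ j) M p) (W (σ j) p)] at this
          exact this
      _ = _ + _ := integral_add ((hWi _).sub (hfi _ M)).abs ((hWi _).sub (hfi _ M')).abs
      _ ≤ 2 * e := by have := h M hM (σ j); have := h M' hM' (σ j); linarith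
  let V : ℕ → (X →₁[lam] ℝ) := fun M => (hvi M).toL1 (v M)
  have hV : CauchySeq V := by
    rw [Metric.cauchySeq_iff]
    intro e he
    obtain ⟨M₀, h⟩ := hcau (e/4) (by positivity)
    refine ⟨M₀, fun M hM M' hM' => ?_⟩
    rw [dist_eq_norm]
    simp only [V]
    rw [← Integrable.toL1_sub, L1.norm_of_fun_eq_integral_norm]
    have := h M hM M' hM'
    simp only [Pi.sub_apply, Real.norm_eq_abs]
    linarith
  obtain ⟨w', hw'⟩ := cauchySeq_tendsto_of_complete hV
  have hw'i : Integrable w' lam := L1.integrable_coeFn w'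
  let w : X → ℝ := hw'i.1.mk
  have hww : w' =ᵐ[lam] w := hw'i.1.ae_eq_mk
  have hwi : Integrable w lam := hw'i.congr hww
  refine ⟨σ, hσ, w, hw'i.1.stronglyMeasurable_mk.measurable, hwi, ?_⟩
  have hvw : ∀ e : ℝ, 0 < e → ∃ M₀ : ℕ, ∀ M, M₀ ≤ M → ∫ p, |v M p - w p| ∂lam ≤ e := by
    intro e he
    obtain ⟨M₀, h⟩ := (Metric.tendsto_atTop.1 hw') e he
    refine ⟨M₀, fun M hM => ?_⟩
    have h1 := h M hM
    have h2 : w' = hwi.toL1 w := by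
      rw [← Integrable.toL1_coeFn w' hw'i]
      exact (Integrable.toL1_eq_toL1_iff _ _ _ _).2 hww
    rw [h2, dist_eq_norm] at h1
    simp only [V] at h1
    rw [← Integrable.toL1_sub, L1.norm_of_fun_eq_integral_norm] at h1
    exact h1.le
  rintro h hh ⟨C, hC⟩
  have hC0 : 0 ≤ |C| := abs_nonneg C
  have hC' : ∀ p, |h p| ≤ |C| := fun p => (hC p).trans (le_abs_self C)
  have hh' := hh.aestronglyMeasurable (μ := lam)
  have hh2 : MemLp h 2 lam := MemLp.of_bound hh' C (Eventually.of_forall hC)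
  rw [Metric.tendsto_atTop]
  intro e he
  set d : ℝ := e / (4 * (|C| + 1)) with hd
  have hdpos : 0 < d := by positivity
  have hCd : |C| * d ≤ e / 4 := by
    rw [hd, mul_div_assoc', div_le_div_iff₀ (by positivity) (by positivity)]
    nlinarith
  obtain ⟨M₁, h1⟩ := htail' d hdpos
  obtain ⟨M₂, h2⟩ := hvw d hdpos
  let M := max M₁ M₂
  obtain ⟨J, hJ⟩ := (Metric.tendsto_atTop.1 (hlim M h hh2)) (e/4) (by positivity)
  refine ⟨J, fun j hj => ?_⟩
  have a1 := hJ j hj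
  rw [Real.dist_eq] at a1 ⊢
  have a2 := (hmul _ h |C| ((hWi (σ j)).sub (hfi (σ j) M)) hh' hC').2
  have a3 := (hmul _ h |C| ((hvi M).sub hwi) hh' hC').2
  have b2 := h1 M (le_max_left _ _) (σ j)
  have b3 := h2 M (le_max_right _ _)
  simp only [Pi.sub_apply, sub_mul] at a2 a3
  rw [integral_sub (hmul _ h |C| (hWi _) hh' hC').1 (hmul _ h |C| (hfi _ M) hh' hC').1] at a2
  rw [integral_sub (hmul _ h |C| (hvi _) hh' hC').1 (hmul _ h |C| hwi hh' hC').1] at a3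
  have c2 := a2.trans ((mul_le_mul_of_nonneg_left b2 hC0).trans hCd)
  have c3 := a3.trans ((mul_le_mul_of_nonneg_left b3 hC0).trans hCd)
  rw [abs_le] at c2 c3
  rw [abs_lt] at a1 ⊢
  constructor <;> linarith [a1.1, a1.2, c2.1, c2.2, c3.1, c3.2]

lemma young_mono {Φ : ℝ → ℝ} (hΦ : IsYoung Φ) {s t : ℝ} (hs : 0 ≤ s) (hst : s ≤ t) :
    Φ s ≤ Φ t := by
  obtain ⟨-, hcv, h0, -, hnn, -, -⟩ := hΦ
  rcases eq_or_lt_of_le (hs.trans hst) with h | h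
  · have : s = t := by linarith
    rw [this]
  · have h1 := hcv.2 (show t ∈ Set.Ici (0:ℝ) from h.le) (show (0:ℝ) ∈ Set.Ici (0:ℝ) from Set.mem_Ici.2 le_rfl)
      (show (0:ℝ) ≤ s / t by positivity) (show (0:ℝ) ≤ 1 - s / t by rw [sub_nonneg, div_le_one h]; exact hst) (by ring)
    simp only [smul_eq_mul, h0, mul_zero, add_zero] at h1
    rw [div_mul_cancel₀ _ h.ne'] at h1
    have h2 : s / t * Φ t ≤ 1 * Φ t :=
      mul_le_mul_of_nonneg_right ((div_le_one h).2 hst) (hnn t h.le)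
    linarith

lemma young_cont {Φ : ℝ → ℝ} (hΦ : IsYoung Φ) {C : ℝ} (hC : 0 < C) :
    Continuous (fun t => Φ (|t| / C)) :=
  hΦ.1.comp_continuous (by fun_prop) (fun t => by simp only [Set.mem_Ici]; positivity)

lemma young_convex {Φ : ℝ → ℝ} (hΦ : IsYoung Φ) {C : ℝ} (hC : 0 < C) :
    ConvexOn ℝ Set.univ (fun t => Φ (|t| / C)) := by
  refine ⟨convex_univ, fun x _ y _ a b ha hb hab => ?_⟩
  simp only [smul_eq_mul]
  have h1 := hΦ.2.1.2 (show |x| / C ∈ Set.Ici (0:ℝ) by simp only [Set.mem_Ici]; positivity)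
    (show |y| / C ∈ Set.Ici (0:ℝ) by simp only [Set.mem_Ici]; positivity) ha hb hab
  simp only [smul_eq_mul] at h1
  refine le_trans (young_mono hΦ (by positivity) ?_) h1
  rw [mul_div_assoc', mul_div_assoc', ← add_div]
  gcongr
  refine (abs_add_le _ _).trans ?_
  rw [abs_mul, abs_mul, abs_of_nonneg ha, abs_of_nonneg hb]

lemma young_tail {Φ : ℝ → ℝ} (hΦ : IsYoung Φ) {C : ℝ} (hC : 0 < C) {e : ℝ} (he : 0 < e) :
    ∃ M : ℕ, ∀ t : ℝ, |t - clampR M t| ≤ e * Φ (|t| / C) := by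
  have h := hΦ.2.2.2.2.2.2
  obtain ⟨R, hR⟩ := (h.eventually_ge_atTop (C / e)).exists_forall_of_atTop
  obtain ⟨M, hM⟩ := exists_nat_ge (C * (max R 1))
  refine ⟨M, fun t => ?_⟩
  have hnn := hΦ.2.2.2.2.1 (|t| / C) (by positivity)
  rcases le_total |t| M with h1 | h1
  · have : clampR M t = t := by
      rw [abs_le] at h1
      unfold clampR; rw [min_eq_left h1.2, max_eq_right h1.1]
    rw [this, sub_self, abs_zero]; positivity
  · have h2 : max R 1 ≤ |t| / C := by rw [le_div_iff₀ hC]; linarith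
    have h3 := hR (|t| / C) (le_trans (le_max_left _ _) h2)
    have h4 : 0 < |t| / C := lt_of_lt_of_le (by norm_num) ((le_max_right _ _).trans h2)
    rw [le_div_iff₀ h4, div_mul_div_comm, mul_comm C, mul_div_mul_right _ _ hC.ne',
      div_le_iff₀ he] at h3
    have h5 : |t - clampR M t| ≤ |t| := by
      have := clampR_diff (M := 0) (M' := M) (t := t) le_rfl (Nat.cast_nonneg M)
      refine this.trans_eq ?_
      simp [clampR]
    linarith

lemma young_int {Φ : ℝ → ℝ} (hΦ : IsYoung Φ) {C : ℝ} (hC : 0 < C)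
    {X : Type*} [MeasurableSpace X] (lam : Measure X) {W : X → ℝ} (hW : Measurable W)
    (hb : (∫⁻ p, ENNReal.ofReal (Φ (|W p| / C)) ∂lam) ≤ 1) :
    Integrable (fun p => Φ (|W p| / C)) lam ∧ ∫ p, Φ (|W p| / C) ∂lam ≤ 1 := by
  have hm : Measurable (fun p => Φ (|W p| / C)) := (young_cont hΦ hC).measurable.comp hW
  have hnn : ∀ p, 0 ≤ Φ (|W p| / C) := fun p => hΦ.2.2.2.2.1 _ (by positivity)
  refine ⟨⟨hm.aestronglyMeasurable, ?_⟩, ?_⟩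
  · rw [hasFiniteIntegral_iff_ofReal (Eventually.of_forall hnn)]
    exact lt_of_le_of_lt hb ENNReal.one_lt_top
  · rw [integral_eq_lintegral_of_nonneg_ae (Eventually.of_forall hnn) hm.aestronglyMeasurable]
    exact ENNReal.toReal_le_of_le_ofReal zero_le_one (by simpa using hb)

lemma young_L1 {Φ : ℝ → ℝ} (hΦ : IsYoung Φ) {C : ℝ} (hC : 0 < C)
    {X : Type*} [MeasurableSpace X] (lam : Measure X) [IsFiniteMeasure lam] :
    ∃ B : ℝ, 0 ≤ B ∧ ∀ W : X → ℝ, Measurable W →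
    (∫⁻ p, ENNReal.ofReal (Φ (|W p| / C)) ∂lam) ≤ 1 → Integrable W lam ∧ ∫ p, |W p| ∂lam ≤ B := by
  obtain ⟨M, hM⟩ := young_tail hΦ hC (e := 1) one_pos
  refine ⟨lam.real Set.univ * M + 1, by positivity, fun W hW hb => ?_⟩
  obtain ⟨h1, h2⟩ := young_int hΦ hC lam hW hb
  have hpt : ∀ p, |W p| ≤ M + Φ (|W p| / C) := by
    intro p
    have a := hM (W p)
    have b := clampR_abs_le (M := M) (t := W p) (Nat.cast_nonneg M)
    have c := abs_add_le (W p - clampR M (W p)) (clampR M (W p))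
    rw [sub_add_cancel] at c
    linarith
  have hi : Integrable (fun p => (M:ℝ) + Φ (|W p| / C)) lam := (integrable_const _).add h1
  have hWi : Integrable W lam := hi.mono' hW.aestronglyMeasurable (Eventually.of_forall hpt)
  refine ⟨hWi, (integral_mono hWi.abs hi hpt).trans ?_⟩
  rw [integral_add (integrable_const _) h1, integral_const, smul_eq_mul]
  linarith

lemma weak_orlicz {Φ : ℝ → ℝ} (hΦ : IsYoung Φ) {C : ℝ} (hC : 0 < C)
    {X : Type*} [MeasurableSpace X] (lam : Measure X) [IsFiniteMeasure lam]
    (W : ℕ → X → ℝ) (hW : ∀ k, Measurable (W k))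
    (hb : ∀ k, (∫⁻ p, ENNReal.ofReal (Φ (|W k p| / C)) ∂lam) ≤ 1) :
    ∃ σ : ℕ → ℕ, StrictMono σ ∧ ∃ w : X → ℝ, Measurable w ∧ Integrable w lam ∧
      (∫⁻ p, ENNReal.ofReal (Φ (|w p| / C)) ∂lam) ≤ 1 ∧
      ∀ h : X → ℝ, Measurable h → (∃ C, ∀ p, |h p| ≤ C) →
        Tendsto (fun j => ∫ p, W (σ j) p * h p ∂lam) atTop (𝓝 (∫ p, w p * h p ∂lam)) := by
  obtain ⟨B, hB, hL1⟩ := young_L1 hΦ hC lam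
  have hWi : ∀ k, Integrable (W k) lam := fun k => (hL1 _ (hW k) (hb k)).1
  obtain ⟨σ, hσ, w, hw, hwi, hlim⟩ := weak_L1 lam W hW hWi (by
    intro e he
    obtain ⟨M, hM⟩ := young_tail hΦ hC he
    refine ⟨M, fun k => ?_⟩
    obtain ⟨h1, h2⟩ := young_int hΦ hC lam (hW k) (hb k)
    have h3 : ∫ p, |W k p - clampR M (W k p)| ∂lam ≤ ∫ p, e * Φ (|W k p| / C) ∂lam :=
      integral_mono_of_nonneg (Eventually.of_forall fun p => abs_nonneg _) (h1.const_mul e)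
        (Eventually.of_forall fun p => hM _)
    rw [integral_const_mul] at h3
    nlinarith)
  refine ⟨σ, hσ, w, hw, hwi, ?_, hlim⟩
  set G : ℝ → ℝ := fun t => Φ (|t| / C) with hG
  have hGc : ConvexOn ℝ Set.univ G := young_convex hΦ hC
  have hGcont : Continuous G := young_cont hΦ hC
  have hGnn : ∀ t, 0 ≤ G t := fun t => hΦ.2.2.2.2.1 _ (by positivity)
  set D : ℝ → ℝ := fun x => derivWithin G (Set.Ioi x) x with hD
  have hDm : Monotone D := by
    have := hGc.monotoneOn_rightDeriv
    rw [interior_univ] at this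
    exact monotoneOn_univ.1 this
  have hsub : ∀ x y, G x + D x * (y - x) ≤ G y := by
    intro x y
    rcases lt_trichotomy x y with h | h | h
    · have := hGc.rightDeriv_le_slope_of_mem_interior (x := x) (by simp) (Set.mem_univ y) h
      rw [slope_def_field, le_div_iff₀ (by linarith)] at this
      simp only [hD]; linarith
    · subst h; simp
    · have h1 := hGc.slope_le_leftDeriv_of_mem_interior (x := y) (y := x) (Set.mem_univ y) (by simp) h
      have h2 := hGc.leftDeriv_le_rightDeriv_of_mem_interior (x := x) (by simp)
      have h3 := h1.trans h2
      rw [slope_def_field, div_le_iff₀ (by linarith)] at h3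
      simp only [hD]; linarith
  have hstep : ∀ R : ℕ, (∫⁻ p in {p | |w p| ≤ R}, ENNReal.ofReal (G (w p)) ∂lam) ≤ 1 := by
    intro R
    set A : Set X := {p | |w p| ≤ R} with hA
    have hAm : MeasurableSet A := measurableSet_le hw.abs measurable_const
    let h : X → ℝ := A.indicator (fun p => D (w p))
    have hh : Measurable h := (hDm.measurable.comp hw).indicator hAm
    have hhb : ∀ p, |h p| ≤ max |D R| |D (-R)| := by
      intro p
      by_cases hp : p ∈ A
      · simp only [h, Set.indicator_of_mem hp]
        have h1 := abs_le.1 (show |w p| ≤ R from hp)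
        have h2 := hDm h1.1
        have h3 := hDm h1.2
        rw [max_comm]
        exact abs_le_max_abs_abs h2 h3
      · simp only [h, Set.indicator_of_notMem hp, abs_zero]
        exact le_max_of_le_left (abs_nonneg _)
    have hl := hlim h hh ⟨_, hhb⟩
    have hhw : Integrable (fun p => w p * h p) lam :=
      hwi.mul_bdd hh.aestronglyMeasurable (Eventually.of_forall hhb)
    have hhW : ∀ k, Integrable (fun p => W k p * h p) lam := fun k =>
      (hWi k).mul_bdd hh.aestronglyMeasurable (Eventually.of_forall hhb)
    have hgm : Measurable (A.indicator (fun p => G (w p))) :=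
      (hGcont.measurable.comp hw).indicator hAm
    have hpt : ∀ k p, A.indicator (fun p => G (w p)) p ≤ G (W k p) - (W k p * h p - w p * h p) := by
      intro k p
      by_cases hp : p ∈ A
      · simp only [h, Set.indicator_of_mem hp]
        have := hsub (w p) (W k p)
        linarith
      · simp only [h, Set.indicator_of_notMem hp]
        have := hGnn (W k p)
        linarith
    have hind0 : ∀ p, 0 ≤ A.indicator (fun p => G (w p)) p := fun p =>
      Set.indicator_nonneg (fun p _ => hGnn _) p
    have hGW := fun k => young_int hΦ hC lam (hW k) (hb k)
    have hgi : Integrable (A.indicator (fun p => G (w p))) lam := by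
      refine Integrable.mono' ((hGW 0).1.sub ((hhW 0).sub hhw)) hgm.aestronglyMeasurable
        (Eventually.of_forall fun p => ?_)
      rw [Real.norm_of_nonneg (hind0 p)]
      exact hpt 0 p
    have hle : ∀ j, ∫ p, A.indicator (fun p => G (w p)) p ∂lam ≤
        1 - ((∫ p, W (σ j) p * h p ∂lam) - ∫ p, w p * h p ∂lam) := by
      intro j
      have h1 := integral_mono hgi ((hGW (σ j)).1.sub ((hhW (σ j)).sub hhw)) (hpt (σ j))
      have h2 : ∫ p, ((fun p => Φ (|W (σ j) p| / C)) - ((fun p => W (σ j) p * h p) - fun p => w p * h p)) p ∂lam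
        = (∫ p, Φ (|W (σ j) p| / C) ∂lam) - ((∫ p, W (σ j) p * h p ∂lam) - ∫ p, w p * h p ∂lam) := by
        rw [integral_sub' (hGW (σ j)).1 ((hhW (σ j)).sub hhw), integral_sub' (hhW (σ j)) hhw]
      rw [h2] at h1
      have := (hGW (σ j)).2
      linarith
    have hfin : ∫ p, A.indicator (fun p => G (w p)) p ∂lam ≤ 1 := by
      have t1 := (hl.sub_const (∫ p, w p * h p ∂lam)).const_sub 1
      rw [sub_self, sub_zero] at t1
      exact ge_of_tendsto t1 (Eventually.of_forall hle)
    rw [integral_indicator hAm] at hfin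
    rw [← ofReal_integral_eq_lintegral_ofReal ((integrable_indicator_iff hAm).1 hgi)
      (Eventually.of_forall fun p => hGnn _)]
    simpa using ENNReal.ofReal_le_ofReal hfin
  have hU : (⋃ R : ℕ, {p | |w p| ≤ (R:ℝ)}) = Set.univ := by
    refine Set.eq_univ_of_forall fun p => ?_
    obtain ⟨n, hn⟩ := exists_nat_ge |w p|
    exact Set.mem_iUnion.2 ⟨n, hn⟩
  rw [← setLIntegral_univ, ← hU, setLIntegral_iUnion_of_directed]
  · exact iSup_le hstep
  · refine Monotone.directed_le ?_
    intro a b hab p hp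
    exact le_trans (show |w p| ≤ a from hp) (by exact_mod_cast hab)

/-- coordinatewise integer part -/
def flr {N : ℕ} (x : Fin N → ℝ) : Fin N → ℝ := fun i => (⌊x i⌋ : ℝ)

/-- unfolding map -/
def mcell {N : ℕ} (η : ℝ) (x y : Fin N → ℝ) : Fin N → ℝ := η • (flr (η⁻¹ • x) + y)

lemma measurable_flr {N : ℕ} : Measurable (flr : (Fin N → ℝ) → Fin N → ℝ) := by
  unfold flr
  refine measurable_pi_lambda _ fun i => ?_
  exact (measurable_from_top (f := fun n : ℤ => (n : ℝ))).comp (Int.measurable_floor.comp (measurable_pi_apply i))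

lemma measurable_smulR {N : ℕ} (a : ℝ) : Measurable (fun x : Fin N → ℝ => a • x) := by
  fun_prop

lemma measurable_mcell {N : ℕ} (η : ℝ) :
    Measurable (fun p : (Fin N → ℝ) × (Fin N → ℝ) => mcell η p.1 p.2) := by
  unfold mcell
  have h1 := (measurable_flr (N := N)).comp (measurable_smulR (N := N) η⁻¹)
  exact (measurable_smulR η).comp ((h1.comp measurable_fst).add measurable_snd)

lemma measurable_mcell_prod {N : ℕ} {Ω : Type*} [MeasurableSpace Ω] (η : ℝ) :
    Measurable (fun p : ((Fin N → ℝ) × Ω) × (Fin N → ℝ) => mcell η p.1.1 p.2) := by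
  have h1 : Measurable (fun x : Fin N → ℝ => flr (η⁻¹ • x)) :=
    measurable_flr.comp (measurable_smulR η⁻¹)
  have h2 : Measurable (fun p : ((Fin N → ℝ) × Ω) × (Fin N → ℝ) => flr (η⁻¹ • p.1.1)) :=
    h1.comp (measurable_fst.comp measurable_fst)
  have h3 : Measurable (fun p : ((Fin N → ℝ) × Ω) × (Fin N → ℝ) => flr (η⁻¹ • p.1.1) + p.2) :=
    h2.add measurable_snd
  exact (measurable_smulR η).comp h3

/-- half-open unit cube -/
def cube0 (N : ℕ) : Set (Fin N → ℝ) := Set.pi Set.univ (fun _ => Set.Ico 0 1)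

lemma measurableSet_cube0 (N : ℕ) : MeasurableSet (cube0 N) :=
  MeasurableSet.univ_pi fun _ => measurableSet_Ico

lemma restrict_Ycube (N : ℕ) : (volume.restrict (Ycube N) : Measure (Fin N → ℝ)) = volume.restrict (cube0 N) := by
  have := Measure.univ_pi_Ico_ae_eq_Icc (μ := fun _ : Fin N => (volume : Measure ℝ)) (f := 0) (g := 1)
  exact (Measure.restrict_congr_set this).symm

lemma volume_cube0 (N : ℕ) : volume (cube0 N) = 1 := by
  unfold cube0
  rw [Real.volume_pi_Ico]; simp

lemma mp_cell_one (N : ℕ) : MeasurePreserving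
    (fun p : (Fin N → ℝ) × (Fin N → ℝ) => flr p.1 + p.2)
    ((volume : Measure (Fin N → ℝ)).prod (volume.restrict (cube0 N))) volume := by
  have hmeas : Measurable (fun p : (Fin N → ℝ) × (Fin N → ℝ) => flr p.1 + p.2) :=
    (measurable_flr.comp measurable_fst).add measurable_snd
  refine ⟨hmeas, ?_⟩
  let F : (Fin N → ℝ) → (Fin N → ℤ) := fun x i => ⌊x i⌋
  have hF : Measurable F := measurable_pi_lambda _ fun i => Int.measurable_floor.comp (measurable_pi_apply i)
  let c : (Fin N → ℤ) → (Fin N → ℝ) := fun k i => (k i : ℝ)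
  have hFc : ∀ k x, F (c k + x) = k ↔ x ∈ cube0 N := by
    intro k x
    simp only [F, c, cube0, Set.mem_pi, Set.mem_univ, true_implies, funext_iff, Pi.add_apply,
      Int.floor_intCast_add]
    refine forall_congr' fun i => ?_
    rw [← Int.floor_eq_zero_iff]
    constructor <;> intro h <;> omega
  have hcell : ∀ (k : Fin N → ℤ) (s : Set (Fin N → ℝ)), 
      volume (F ⁻¹' {k} ∩ s) = volume ({y | c k + y ∈ s} ∩ cube0 N) := by
    intro k s
    rw [← measure_preimage_add volume (c k) (F ⁻¹' {k} ∩ s)]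
    congr 1
    ext x
    simp only [Set.mem_preimage, Set.mem_inter_iff, Set.mem_singleton_iff, hFc, Set.mem_ofPred_eq]
    tauto
  ext s hs
  rw [Measure.map_apply hmeas hs, Measure.prod_apply (hmeas hs)]
  let G : (Fin N → ℤ) → ℝ≥0∞ := fun k => volume ({y | c k + y ∈ s} ∩ cube0 N)
  have h1 : ∀ x : Fin N → ℝ, (volume.restrict (cube0 N)) (Prod.mk x ⁻¹' ((fun p : (Fin N → ℝ) × (Fin N → ℝ) => flr p.1 + p.2) ⁻¹' s)) = G (F x) := by
    intro x
    rw [Measure.restrict_apply' (measurableSet_cube0 N)]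
    rfl
  simp_rw [h1]
  rw [← lintegral_map (f := G) (measurable_of_countable _) hF, lintegral_countable']
  have h2 : ∀ k, (Measure.map F volume) {k} = 1 := by
    intro k
    rw [Measure.map_apply hF (measurableSet_singleton k)]
    have := hcell k Set.univ
    simpa [volume_cube0] using this
  have h3 : volume s = (Measure.map F (volume.restrict s)) Set.univ := by
    rw [Measure.map_apply hF MeasurableSet.univ]; simp
  rw [h3, ← lintegral_one, lintegral_countable']
  refine tsum_congr fun k => ?_
  rw [h2, mul_one, one_mul, Measure.map_apply hF (measurableSet_singleton k),
    Measure.restrict_apply (hF (measurableSet_singleton k)), hcell]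

lemma mp_cell (N : ℕ) {η : ℝ} (hη : 0 < η) : MeasurePreserving
    (fun p : (Fin N → ℝ) × (Fin N → ℝ) => mcell η p.1 p.2)
    ((volume : Measure (Fin N → ℝ)).prod (volume.restrict (cube0 N))) volume := by
  refine ⟨measurable_mcell η, ?_⟩
  have hm1 : Measurable (fun x : Fin N → ℝ => η⁻¹ • x) := measurable_smulR _
  have hm2 : Measurable (fun x : Fin N → ℝ => η • x) := measurable_smulR _
  have hm3 := (mp_cell_one N).measurable
  have e : (fun p : (Fin N → ℝ) × (Fin N → ℝ) => mcell η p.1 p.2) =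
      (fun x : Fin N → ℝ => η • x) ∘ ((fun p : (Fin N → ℝ) × (Fin N → ℝ) => flr p.1 + p.2) ∘
        (Prod.map (fun x : Fin N → ℝ => η⁻¹ • x) id)) := rfl
  rw [e, ← Measure.map_map hm2 (hm3.comp (hm1.prodMap measurable_id)),
    ← Measure.map_map hm3 (hm1.prodMap measurable_id), ← Measure.map_prod_map _ _ hm1 measurable_id,
    Measure.map_addHaar_smul _ (inv_ne_zero hη.ne'), Measure.map_id, Measure.prod_smul_left,
    Measure.map_smul, (mp_cell_one N).map_eq, Measure.map_smul,
    Measure.map_addHaar_smul _ hη.ne', smul_smul, ← ENNReal.ofReal_mul (by positivity)]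
  rw [← abs_mul, ← mul_inv, ← mul_pow, inv_mul_cancel₀ hη.ne']
  simp

lemma mcell_close {N : ℕ} {η : ℝ} (hη : 0 < η) (x y : Fin N → ℝ) (hy : y ∈ cube0 N) :
    dist (mcell η x y) x ≤ η := by
  rw [dist_pi_le_iff hη.le]
  intro i
  have hyi := hy i (Set.mem_univ i)
  have h1 := Int.floor_le (η⁻¹ * x i)
  have h2 := Int.lt_floor_add_one (η⁻¹ * x i)
  have e : mcell η x y i - x i = η * ((⌊η⁻¹ * x i⌋ : ℝ) + y i - η⁻¹ * x i) := by
    simp only [mcell, flr, Pi.smul_apply, Pi.add_apply, smul_eq_mul]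
    field_simp
  rw [Real.dist_eq, e, abs_mul, abs_of_pos hη]
  have : |(⌊η⁻¹ * x i⌋ : ℝ) + y i - η⁻¹ * x i| ≤ 1 := by
    rw [abs_le]; constructor <;> linarith [hyi.1, hyi.2]
  nlinarith

/-- unfolding combined with the inverse flow -/
def Pmap {N : ℕ} {Ω : Type*} (T : (Fin N → ℝ) → Ω → Ω) (e : ℝ)
    (p : ((Fin N → ℝ) × Ω) × (Fin N → ℝ)) : (Fin N → ℝ) × Ω :=
  (mcell (e ^ 2) p.1.1 p.2, T (-(e⁻¹ • mcell (e ^ 2) p.1.1 p.2)) p.1.2)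

lemma mp_Pmap {N : ℕ} {Ω : Type*} [MeasurableSpace Ω] (μ : Measure Ω) [IsProbabilityMeasure μ]
    (T : (Fin N → ℝ) → Ω → Ω) (hT : IsDynSys μ T) {e : ℝ} (he : 0 < e) :
    MeasurePreserving (Pmap T e)
      (((volume : Measure (Fin N → ℝ)).prod μ).prod (volume.restrict (cube0 N))) (volume.prod μ) := by
  let ν : Measure (Fin N → ℝ) := volume.restrict (cube0 N)
  have s1 : MeasurePreserving (MeasurableEquiv.prodAssoc : ((Fin N → ℝ) × Ω) × (Fin N → ℝ) ≃ᵐ _)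
    (((volume : Measure (Fin N → ℝ)).prod μ).prod ν) (volume.prod (μ.prod ν)) :=
    measurePreserving_prodAssoc _ _ _
  have s2 : MeasurePreserving (Prod.map id Prod.swap) ((volume : Measure (Fin N → ℝ)).prod (μ.prod ν))
    (volume.prod (ν.prod μ)) := (MeasurePreserving.id _).prod Measure.measurePreserving_swap
  have s3 : MeasurePreserving (MeasurableEquiv.prodAssoc.symm : _ ≃ᵐ ((Fin N → ℝ) × (Fin N → ℝ)) × Ω)
    (volume.prod (ν.prod μ)) (((volume : Measure (Fin N → ℝ)).prod ν).prod μ)  :=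
    (measurePreserving_prodAssoc _ _ _).symm
  have s4 := (mp_cell N (η := e ^ 2) (by positivity)).prod (MeasurePreserving.id μ)
  have s5 : MeasurePreserving (fun p : (Fin N → ℝ) × Ω => (id p.1, T (-(e⁻¹ • p.1)) p.2))
      ((volume : Measure (Fin N → ℝ)).prod μ) (volume.prod μ) := by
    refine MeasurePreserving.skew_product (g := fun x ω => T (-(e⁻¹ • x)) ω) (MeasurePreserving.id _) ?_
      (Eventually.of_forall fun x => (hT.2.2.1 _).map_eq)
    exact hT.2.2.2.comp ((((measurable_smulR e⁻¹).comp measurable_fst).neg).prodMk measurable_snd)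
  exact s5.comp (s4.comp (s3.comp (s2.comp s1)))

lemma lux_uniform {Φ : ℝ → ℝ} (hΦ : IsYoung Φ) {X : Type*} [MeasurableSpace X] (lam : Measure X)
    (u : ℕ → X → ℝ) (hub : (⨆ k, luxNorm Φ lam (u k)) < ⊤) :
    ∃ C : ℝ, 0 < C ∧ ∀ k, (∫⁻ p, ENNReal.ofReal (Φ (|u k p| / C)) ∂lam) ≤ 1 := by
  set S := ⨆ k, luxNorm Φ lam (u k) with hS
  refine ⟨S.toReal + 1, by positivity, fun k => ?_⟩
  have h1 : luxNorm Φ lam (u k) < ENNReal.ofReal (S.toReal + 1) := by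
    refine lt_of_le_of_lt (le_iSup (fun k => luxNorm Φ lam (u k)) k) ?_
    rw [ENNReal.lt_ofReal_iff_toReal_lt hub.ne]
    linarith
  obtain ⟨d, ⟨δ, hδ, rfl, hle⟩, hlt⟩ := sInf_lt_iff.1 h1
  have h2 : δ < S.toReal + 1 := (ENNReal.ofReal_lt_ofReal_iff (by positivity)).1 hlt
  refine (lintegral_mono fun p => ?_).trans hle
  refine ENNReal.ofReal_le_ofReal (young_mono hΦ (by positivity) ?_)
  gcongr

lemma zper_bdd {N : ℕ} {g : (Fin N → ℝ) → ℝ} (hg : Continuous g) (hp : ZPeriodic g) :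
    ∃ C, 0 ≤ C ∧ ∀ y, |g y| ≤ C := by
  have hc : IsCompact (Ycube N) := isCompact_Icc
  obtain ⟨C, hC⟩ := hc.exists_bound_of_continuousOn hg.continuousOn
  refine ⟨max C 0, le_max_right _ _, fun y => ?_⟩
  have h := hp (fun i => Int.fract (y i)) (fun i => ⌊y i⌋)
  have e : ((fun i => Int.fract (y i)) + fun i => ((⌊y i⌋ : ℤ) : ℝ)) = y := by
    funext i; simp only [Pi.add_apply]; exact Int.fract_add_floor _
  rw [e] at h
  rw [h]
  refine (hC _ ?_).trans (le_max_left _ _)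
  exact Set.mem_Icc.2 ⟨fun i => Int.fract_nonneg _, fun i => (Int.fract_lt_one _).le⟩

set_option maxHeartbeats 1000000 in
/-- compactness for weak stochastic two-scale convergence in Orlicz spaces. -/
theorem stmt1 {N : ℕ} (hN : 1 ≤ N) {Ω : Type*} [MeasurableSpace Ω] (μ : Measure Ω)
    [IsProbabilityMeasure μ] (hgen : CountGenModNull μ)
    (Φ : ℝ → ℝ) (hΦ : IsYoung Φ) (hΦ2 : Delta2 Φ) (hΦc2 : Delta2 (conjY Φ))
    (T : (Fin N → ℝ) → Ω → Ω) (hT : IsDynSys μ T)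
    (Q : Set (Fin N → ℝ)) (hQo : IsOpen Q) (hQb : Bornology.IsBounded Q)
    (ε : ℕ → ℝ) (hε : ∀ k, ε k ∈ Set.Ioc (0 : ℝ) 1) (hε0 : Tendsto ε atTop (nhds 0))
    (u : ℕ → (Fin N → ℝ) → Ω → ℝ)
    (humeas : ∀ k, Measurable fun p : (Fin N → ℝ) × Ω => u k p.1 p.2)
    (hubd : (⨆ k, luxNorm Φ ((volume.restrict Q).prod μ) fun p => u k p.1 p.2) < ⊤) :
    ∃ σ : ℕ → ℕ, StrictMono σ ∧
      ∃ u₀ : (Fin N → ℝ) → Ω → (Fin N → ℝ) → ℝ,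
        (Measurable fun p : ((Fin N → ℝ) × Ω) × (Fin N → ℝ) => u₀ p.1.1 p.1.2 p.2) ∧
        (∀ x ω, ZPeriodic (u₀ x ω)) ∧
        luxNorm Φ (((volume.restrict Q).prod μ).prod (volume.restrict (Ycube N)))
          (fun p => u₀ p.1.1 p.1.2 p.2) < ⊤ ∧
        WeakStoch2Scale μ T Q (fun j => ε (σ j)) (fun j => u (σ j)) u₀ := by
  obtain ⟨C, hC, hbd⟩ := lux_uniform hΦ ((volume.restrict Q).prod μ)
    (fun k (p : (Fin N → ℝ) × Ω) => u k p.1 p.2) hubd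
  have hQm : MeasurableSet Q := hQo.measurableSet
  have hQfin : IsFiniteMeasure ((volume : Measure (Fin N → ℝ)).restrict Q) :=
    ⟨by rw [Measure.restrict_apply_univ]; exact hQb.measure_lt_top⟩
  set ν : Measure (Fin N → ℝ) := volume.restrict (cube0 N) with hν
  have hνfin : IsFiniteMeasure ν := ⟨by
    rw [hν, Measure.restrict_apply_univ, volume_cube0]; exact ENNReal.one_lt_top⟩
  set A : Set ((Fin N → ℝ) × Ω) := Q ×ˢ Set.univ with hA
  have hAm : MeasurableSet A := hQm.prod MeasurableSet.univ
  set l0 : Measure ((Fin N → ℝ) × Ω) := volume.prod μ with hl0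
  have hl0A : (volume.restrict Q).prod μ = l0.restrict A := by
    rw [hl0, hA, ← Measure.prod_restrict, Measure.restrict_univ]
  set lQ : Measure ((Fin N → ℝ) × Ω) := (volume.restrict Q).prod μ with hlQ
  set linf : Measure (((Fin N → ℝ) × Ω) × (Fin N → ℝ)) := l0.prod ν with hlinf
  set lam : Measure (((Fin N → ℝ) × Ω) × (Fin N → ℝ)) := lQ.prod ν with hlam
  set A' : Set (((Fin N → ℝ) × Ω) × (Fin N → ℝ)) := A ×ˢ Set.univ with hA'
  have hA'm : MeasurableSet A' := hAm.prod MeasurableSet.univ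
  have hlamA : lam = linf.restrict A' := by
    have h0 := Measure.prod_restrict (μ := l0) (ν := ν) A Set.univ
    rw [Measure.restrict_univ] at h0
    rw [hlam, hl0A]
    exact h0
  have hεpos : ∀ k, 0 < ε k := fun k => (hε k).1
  have hP : ∀ k, MeasurePreserving (Pmap T (ε k)) linf l0 := fun k => mp_Pmap μ T hT (hεpos k)
  let U : ℕ → (Fin N → ℝ) × Ω → ℝ := fun k => A.indicator (fun p => u k p.1 p.2)
  have hU : ∀ k, Measurable (U k) := fun k => (humeas k).indicator hAm
  let W : ℕ → ((Fin N → ℝ) × Ω) × (Fin N → ℝ) → ℝ := fun k p => U k (Pmap T (ε k) p)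
  have hW : ∀ k, Measurable (W k) := fun k => (hU k).comp (hP k).measurable
  have hWb : ∀ k, (∫⁻ p, ENNReal.ofReal (Φ (|W k p| / C)) ∂lam) ≤ 1 := by
    intro k
    have hm : Measurable (fun t : ℝ => ENNReal.ofReal (Φ (|t| / C))) :=
      (young_cont hΦ hC).measurable.ennreal_ofReal
    calc (∫⁻ p, ENNReal.ofReal (Φ (|W k p| / C)) ∂lam)
        ≤ ∫⁻ p, ENNReal.ofReal (Φ (|W k p| / C)) ∂linf := by
          rw [hlamA]; exact setLIntegral_le_lintegral _ _
      _ = ∫⁻ q, ENNReal.ofReal (Φ (|U k q| / C)) ∂l0 :=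
          (hP k).lintegral_comp (hm.comp (hU k))
      _ = ∫⁻ q, A.indicator (fun q => ENNReal.ofReal (Φ (|u k q.1 q.2| / C))) q ∂l0 := by
          refine lintegral_congr fun q => ?_
          by_cases hq : q ∈ A
          · simp only [U, Set.indicator_of_mem hq]
          · simp only [U, Set.indicator_of_notMem hq, abs_zero, zero_div, hΦ.2.2.1, ENNReal.ofReal_zero]
      _ = ∫⁻ q, ENNReal.ofReal (Φ (|u k q.1 q.2| / C)) ∂lQ := by
          rw [lintegral_indicator hAm, hl0A]
      _ ≤ 1 := hbd k
  obtain ⟨B, hB0, hB⟩ := young_L1 hΦ hC lQ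
  have hui : ∀ k, Integrable (fun p : (Fin N → ℝ) × Ω => u k p.1 p.2) lQ := fun k =>
    (hB _ (humeas k) (hbd k)).1
  have hUi : ∀ k, Integrable (U k) l0 := fun k => by
    have := hui k
    rw [hl0A] at this
    exact (integrable_indicator_iff hAm).2 this
  have hWi : ∀ k, Integrable (W k) linf := fun k => (hP k).integrable_comp_of_integrable (hUi k)
  have hWB : ∀ k, ∫ p, |W k p| ∂linf ≤ B := by
    intro k
    have h1 : ∫ p, |W k p| ∂linf = ∫ q, |U k q| ∂l0 := by
      rw [← (hP k).map_eq, integral_map (hP k).aemeasurable]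
      exact (hU k).abs.aestronglyMeasurable
    have h2 : ∫ q, |U k q| ∂l0 = ∫ q, |u k q.1 q.2| ∂lQ := by
      rw [hl0A, ← integral_indicator hAm]
      refine integral_congr_ae (Eventually.of_forall fun q => ?_)
      by_cases hq : q ∈ A
      · simp only [U, Set.indicator_of_mem hq]
      · simp only [U, Set.indicator_of_notMem hq, abs_zero]
    rw [h1, h2]
    exact (hB _ (humeas k) (hbd k)).2
  obtain ⟨σ, hσ, w, hw, hwi, hwb, hlim⟩ := weak_orlicz hΦ hC lam W hW hWb
  let fr : (Fin N → ℝ) → (Fin N → ℝ) := fun y i => Int.fract (y i)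
  have hfr : Measurable fr := measurable_pi_lambda _ fun i => measurable_fract.comp (measurable_pi_apply i)
  let u₀ : (Fin N → ℝ) → Ω → (Fin N → ℝ) → ℝ := fun x ω y => w ((x, ω), fr y)
  let w' : ((Fin N → ℝ) × Ω) × (Fin N → ℝ) → ℝ := fun p => u₀ p.1.1 p.1.2 p.2
  have hw'm : Measurable w' := hw.comp (measurable_fst.prodMk (hfr.comp measurable_snd))
  have hcubeae : ∀ (l : Measure ((Fin N → ℝ) × Ω)) [SFinite l], ∀ᵐ p ∂(l.prod ν), p.2 ∈ cube0 N := by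
    intro l _
    have h0 : ∀ᵐ y ∂ν, y ∈ cube0 N := ae_restrict_mem (measurableSet_cube0 N)
    exact Measure.quasiMeasurePreserving_snd.ae h0
  have hww' : w' =ᵐ[lam] w := by
    filter_upwards [hcubeae lQ] with p hp
    have : fr p.2 = p.2 := by
      funext i
      have := hp i (Set.mem_univ i)
      exact Int.fract_eq_self.2 this
    simp only [w', u₀, this]
  have hw'i : Integrable w' lam := hwi.congr hww'.symm
  refine ⟨σ, hσ, u₀, hw'm, ?_, ?_, ?_⟩
  · intro x ω y k
    simp only [u₀]
    congr 2
    funext i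
    simp [fr]
  · rw [restrict_Ycube]
    refine lt_of_le_of_lt (b := ENNReal.ofReal C) (sInf_le ⟨C, hC, rfl, ?_⟩) ENNReal.ofReal_lt_top
    refine le_trans (le_of_eq ?_) hwb
    refine lintegral_congr_ae ?_
    filter_upwards [hww'] with p hp
    rw [← hp]
  intro φ hφ hφc hφQ ψ hψ hψb g hg hgp
  obtain ⟨Cψ', hCψ'⟩ := hψb
  obtain ⟨Cψ, hCψ0, hCψ⟩ : ∃ c, 0 ≤ c ∧ ∀ ω, |ψ ω| ≤ c :=
    ⟨|Cψ'|, abs_nonneg _, fun ω => (hCψ' ω).trans (le_abs_self _)⟩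
  obtain ⟨Cg, hCg0, hCg⟩ := zper_bdd hg hgp
  have hφcont : Continuous φ := hφ.continuous
  obtain ⟨Cφ', hCφ'⟩ := hφcont.bounded_above_of_compact_support hφc
  obtain ⟨Cφ, hCφ0, hCφ⟩ : ∃ c, 0 ≤ c ∧ ∀ x, |φ x| ≤ c :=
    ⟨|Cφ'|, abs_nonneg _, fun ω => (hCφ' ω).trans (le_abs_self _)⟩
  have hφu : UniformContinuous φ := hφc.uniformContinuous_of_continuous hφcont
  -- rewriting the left-hand side
  have hI : ∀ k, (∫ x in Q, (∫ ω, u k x ω * φ x * ψ (T ((ε k)⁻¹ • x) ω) *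
              g (((ε k) ^ 2)⁻¹ • x) ∂μ)) =
      ∫ p, W k p * (φ (mcell (ε k ^ 2) p.1.1 p.2) * ψ p.1.2 * g p.2) ∂linf := by
    intro k
    let F : (Fin N → ℝ) × Ω → ℝ := fun q => u k q.1 q.2 *
      (φ q.1 * ψ (T ((ε k)⁻¹ • q.1) q.2) * g (((ε k) ^ 2)⁻¹ • q.1))
    have hFm' : Measurable (fun q : (Fin N → ℝ) × Ω =>
      (φ q.1 * ψ (T ((ε k)⁻¹ • q.1) q.2) * g (((ε k) ^ 2)⁻¹ • q.1))) := by
      refine ((hφcont.measurable.comp measurable_fst).mul ?_).mul ?_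
      · exact hψ.comp (hT.2.2.2.comp (((measurable_smulR _).comp measurable_fst).prodMk measurable_snd))
      · exact hg.measurable.comp ((measurable_smulR _).comp measurable_fst)
    have hFm : Measurable F := (humeas k).mul hFm'
    have hFi : Integrable F lQ := by
      refine (hui k).mul_bdd (c := Cφ * Cψ * Cg) hFm'.aestronglyMeasurable (Eventually.of_forall fun q => ?_)
      rw [Real.norm_eq_abs, abs_mul, abs_mul]
      have := hCφ q.1; have := hCψ (T ((ε k)⁻¹ • q.1) q.2); have := hCg (((ε k) ^ 2)⁻¹ • q.1)
      gcongr
    have h1 : (∫ x in Q, (∫ ω, u k x ω * φ x * ψ (T ((ε k)⁻¹ • x) ω) *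
              g (((ε k) ^ 2)⁻¹ • x) ∂μ)) = ∫ q, F q ∂lQ := by
      rw [hlQ, integral_prod _ hFi]
      simp only [F, mul_assoc]
    rw [h1, hl0A, ← integral_indicator hAm, ← (hP k).map_eq, integral_map (hP k).aemeasurable
      (hFm.indicator hAm).aestronglyMeasurable]
    refine integral_congr_ae (Eventually.of_forall fun p => ?_)
    have hε' := (hεpos k).ne'
    have e1 : T ((ε k)⁻¹ • (Pmap T (ε k) p).1) (Pmap T (ε k) p).2 = p.1.2 := by
      simp only [Pmap]
      have := congrFun (hT.2.1 ((ε k)⁻¹ • mcell (ε k ^ 2) p.1.1 p.2) (-((ε k)⁻¹ • mcell (ε k ^ 2) p.1.1 p.2))) p.1.2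
      rw [add_neg_cancel, hT.1] at this
      exact this.symm
    have e2 : g (((ε k) ^ 2)⁻¹ • (Pmap T (ε k) p).1) = g p.2 := by
      simp only [Pmap, mcell]
      rw [smul_smul, inv_mul_cancel₀ (pow_ne_zero 2 hε'), one_smul, add_comm]
      exact hgp p.2 (fun i => ⌊(((ε k) ^ 2)⁻¹ • p.1.1) i⌋)
    by_cases hq : Pmap T (ε k) p ∈ A
    · simp only [W, U, Set.indicator_of_mem hq, F]
      rw [e1, e2]; rfl
    · simp only [W, U, Set.indicator_of_notMem hq, zero_mul]
  let h : ((Fin N → ℝ) × Ω) × (Fin N → ℝ) → ℝ := fun p => φ p.1.1 * ψ p.1.2 * g p.2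
  have hhm : Measurable h := ((hφcont.measurable.comp (measurable_fst.comp measurable_fst)).mul
    (hψ.comp (measurable_snd.comp measurable_fst))).mul (hg.measurable.comp measurable_snd)
  have hhb : ∀ p, |h p| ≤ Cφ * Cψ * Cg := by
    intro p
    simp only [h]
    rw [abs_mul, abs_mul]
    have := hCφ p.1.1; have := hCψ p.1.2; have := hCg p.2
    gcongr
  have hR : (∫ x in Q, (∫ ω, (∫ y in Ycube N, u₀ x ω y * φ x * ψ ω * g y) ∂μ)) =
      ∫ p, w p * h p ∂lam := by
    have hi : Integrable (fun p => w' p * h p) lam :=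
      hw'i.mul_bdd hhm.aestronglyMeasurable (Eventually.of_forall hhb)
    have e1 : ∫ p, w p * h p ∂lam = ∫ p, w' p * h p ∂lam :=
      integral_congr_ae (by filter_upwards [hww'] with p hp; rw [hp])
    rw [e1, hlam, integral_prod _ hi, hlQ, integral_prod _ hi.integral_prod_left, restrict_Ycube]
    simp only [w', h, mul_assoc]
    rfl
  have hJ : ∀ k, ∫ p, W k p * h p ∂lam = ∫ p, W k p * h p ∂linf := by
    intro k
    rw [hlamA]
    refine setIntegral_eq_integral_of_forall_compl_eq_zero fun p hp => ?_
    have : p.1.1 ∉ tsupport φ := fun hx => hp (by simp [hA', hA, hφQ hx])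
    simp [h, image_eq_zero_of_notMem_tsupport this]
  have hdiff : Tendsto (fun k => (∫ p, W k p * (φ (mcell (ε k ^ 2) p.1.1 p.2) * ψ p.1.2 * g p.2) ∂linf)
      - ∫ p, W k p * h p ∂linf) atTop (𝓝 0) := by
    rw [Metric.tendsto_atTop]
    intro e he
    set K := Cψ * Cg * B with hK
    have hK0 : 0 ≤ K := by positivity
    set d := e / (2 * (K + 1)) with hd
    have hdpos : 0 < d := by positivity
    obtain ⟨r, hr, hru⟩ := Metric.uniformContinuous_iff.1 hφu d hdpos
    have hε2 : Tendsto (fun k => ε k ^ 2) atTop (𝓝 0) := by simpa using hε0.pow 2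
    obtain ⟨k₀, hk₀⟩ := eventually_atTop.1 (hε2.eventually_lt_const hr)
    refine ⟨k₀, fun k hk => ?_⟩
    have hη : 0 < ε k ^ 2 := pow_pos (hεpos k) 2
    have hmm : Measurable (fun p : ((Fin N → ℝ) × Ω) × (Fin N → ℝ) => φ (mcell (ε k ^ 2) p.1.1 p.2) * ψ p.1.2 * g p.2) := by
      have hm1 := measurable_mcell_prod (N := N) (Ω := Ω) (ε k ^ 2)
      exact ((hφcont.measurable.comp hm1).mul (hψ.comp (measurable_snd.comp measurable_fst))).mul
        (hg.measurable.comp measurable_snd)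
    have hi1 : Integrable (fun p => W k p * (φ (mcell (ε k ^ 2) p.1.1 p.2) * ψ p.1.2 * g p.2)) linf := by
      refine (hWi k).mul_bdd (c := Cφ * Cψ * Cg) hmm.aestronglyMeasurable (Eventually.of_forall fun p => ?_)
      rw [Real.norm_eq_abs, abs_mul, abs_mul]
      have := hCφ (mcell (ε k ^ 2) p.1.1 p.2); have := hCψ p.1.2; have := hCg p.2
      gcongr
    have hi2 : Integrable (fun p => W k p * h p) linf :=
      (hWi k).mul_bdd hhm.aestronglyMeasurable (Eventually.of_forall hhb)
    rw [dist_zero_right, ← integral_sub hi1 hi2]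
    have hle : ‖∫ p, (W k p * (φ (mcell (ε k ^ 2) p.1.1 p.2) * ψ p.1.2 * g p.2) - W k p * h p) ∂linf‖
        ≤ ∫ p, (d * Cψ * Cg) * |W k p| ∂linf := by
      refine norm_integral_le_of_norm_le ((hWi k).abs.const_mul _) ?_
      filter_upwards [hcubeae l0] with p hp
      have hc := mcell_close hη p.1.1 p.2 hp
      have hc2 := (hru (lt_of_le_of_lt hc (hk₀ k hk))).le
      rw [Real.dist_eq] at hc2
      have e1 : W k p * (φ (mcell (ε k ^ 2) p.1.1 p.2) * ψ p.1.2 * g p.2) - W k p * h p =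
        ((φ (mcell (ε k ^ 2) p.1.1 p.2) - φ p.1.1) * ψ p.1.2 * g p.2) * W k p := by
        simp only [h]; ring
      rw [e1, Real.norm_eq_abs, abs_mul, abs_mul, abs_mul]
      have := hCψ p.1.2; have := hCg p.2
      gcongr
    refine lt_of_le_of_lt hle ?_
    rw [integral_const_mul]
    have h3 : d * Cψ * Cg * ∫ p, |W k p| ∂linf ≤ d * Cψ * Cg * B :=
      mul_le_mul_of_nonneg_left (hWB k) (by positivity)
    have h4 : d * Cψ * Cg * B = e * K / (2 * (K + 1)) := by rw [hd, hK]; ring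
    refine lt_of_le_of_lt (h3.trans_eq h4) ?_
    rw [div_lt_iff₀ (by positivity)]
    nlinarith
  have hl := hlim h hhm ⟨_, hhb⟩
  rw [hR]
  have hfin := (hdiff.comp hσ.tendsto_atTop).add hl
  rw [zero_add] at hfin
  refine hfin.congr fun j => ?_
  rw [hI (σ j), hJ (σ j)]
  simp only [Function.comp_apply, sub_add_cancel]
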